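/- Let r ∈ {4,5} and n ≥ r be integers, set k_2 = ⌈(C(r,2)−1)·C(n,2) / t_{r−1}(n)⌉. Let f be a k_2-weighting on the complete graph K_n on vertex set [n] such that no r-clique of K_n has weight sequence bound (1, 2, …, C(r,2)). Then Σ_e f(e) ≤ k_2·t_{r−1}(n). -/

import Mathlib

open Finset SimpleGraph

/-- `t_t(n)`: the number of edges of the Turán graph `T_t(n)`. -/
def turanE (t n : ℕ) : ℕ := (SimpleGraph.turanGraph n t).edgeFinset.card

/-- The `r`-clique `S` has weight sequence bound `(1, 2, …, C(r,2))` w.r.t. `f`. -/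
def HasWSB (n r : ℕ) (f : Sym2 (Fin n) → ℕ) (S : Finset (Fin n)) : Prop :=
  ∃ g : Fin (r.choose 2) → Sym2 (Fin n),
    Function.Injective g ∧
    (∀ i, ¬ (g i).IsDiag ∧ ∀ v ∈ g i, v ∈ S) ∧
    ∀ i : Fin (r.choose 2), (i : ℕ) + 1 ≤ f (g i)

/-- `k₂ = ⌈(C(r,2)−1)·C(n,2) / t_{r−1}(n)⌉`. -/
def kTwo (r n : ℕ) : ℕ :=
  ⌈(((r.choose 2 - 1) * n.choose 2 : ℕ) : ℚ) / ((turanE (r - 1) n : ℕ) : ℚ)⌉₊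

/-!
Put `t = r - 1` and `N = C(r,2)`. Suppose the total weight exceeds `k t_t(n)`, and pass to a minimal
vertex set `U` on which the weight is still above `k t_t(|U|)`. The average weight inside `U`
exceeds `N - 1`, so `U` contains an edge of weight at least `N`. For a clique `S` in `U` with at
most `t` vertices, minimality applied to `U \ S` shows that the weight between `S` and `U \ S` is
large, so some vertex sends to `S` more than `(t - 1) / t` of the weight allowed by the bound `k`.
Adding such vertices greedily gives an `r`-clique in which at least `N - j` edges are heavier than
`j` for every `j < N`, and Hall's theorem orders its edges.

For `r = 5` the count needs `k > N`. Since `k = N` only happens for `n = r`, all weights are then at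
most `N` and sum to more than `N (N - 1)`, which gives the same count on the whole of `K_5`.
-/

section TuranNumbers

variable {t m n : ℕ}

lemma choose_two_succ (n : ℕ) : (n + 1).choose 2 = n.choose 2 + n := by
  rw [Nat.choose_succ_succ' n 1, Nat.choose_one_right, add_comm]

lemma turanE_of_le (h : n ≤ t) : turanE t n = n.choose 2 := by
  unfold turanE
  convert! card_edgeFinset_top_eq_card_choose_two (V := Fin n)
  · exact turanGraph_eq_top.2 (.inr h)
  · exact (Fintype.card_fin n).symm

lemma turanE_add_self : turanE t (n + t) = turanE t n + n * (t - 1) + t.choose 2 :=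
  card_edgeFinset_turanGraph_add

lemma turanE_succ_add_div (ht : 1 ≤ t) (n : ℕ) : turanE t (n + 1) + n / t = turanE t n + n := by
  induction n using Nat.strong_induction_on with
  | _ n ih =>
    rcases lt_or_ge n t with hlt | hge
    · rw [turanE_of_le hlt, turanE_of_le hlt.le, Nat.div_eq_of_lt hlt,
        choose_two_succ, add_zero]
    · obtain ⟨m, rfl⟩ := Nat.exists_eq_add_of_le' hge
      have ih_m := ih m (by omega)
      rw [add_right_comm, turanE_add_self, turanE_add_self, Nat.add_div_right m ht, Nat.succ_mul]
      omega

lemma turanE_self_succ (ht : 1 ≤ t) : turanE t (t + 1) = (t + 1).choose 2 - 1 := by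
  have h := turanE_succ_add_div ht t
  rw [turanE_of_le le_rfl, Nat.div_self ht] at h
  rw [choose_two_succ]
  omega

lemma turanE_self_add_two (ht : 2 ≤ t) : turanE t (t + 2) = (t + 2).choose 2 - 2 := by
  have hone := turanE_self_succ (by omega : 1 ≤ t)
  have htwo : turanE t (t + 2) + (t + 1) / t = turanE t (t + 1) + (t + 1) :=
    turanE_succ_add_div (by omega) (t + 1)
  rw [Nat.add_div_left 1 (by omega), Nat.div_eq_of_lt (by omega : 1 < t)] at htwo
  have hchoose : (t + 2).choose 2 = (t + 1).choose 2 + (t + 1) := choose_two_succ (t + 1)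
  rw [choose_two_succ t] at hone hchoose
  omega

lemma turanE_pos (ht : 2 ≤ t) (hn : 2 ≤ n) : 0 < turanE t n := by
  refine card_pos.2 ⟨s(⟨0, by omega⟩, ⟨1, by omega⟩), ?_⟩
  simp [turanGraph_adj, Nat.mod_eq_of_lt ht]

lemma mul_choose_two_le_mul_turanE_of_le (ht : 1 ≤ t) {c k : ℕ} (hmn : m ≤ n)
    (h : c * n.choose 2 ≤ k * turanE t n) : c * m.choose 2 ≤ k * turanE t m := by
  rcases lt_or_ge m 2 with hm | hm
  · simp [Nat.choose_eq_zero_of_lt hm]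
  have : Nontrivial (Fin (t + 1)) := Fin.nontrivial_iff_two_le.2 (by omega)
  have turanE_eq (l : ℕ) : turanE t l = extremalNumber l (⊤ : SimpleGraph (Fin (t + 1))) := by
    rw [extremalNumber_top, Fintype.card_fin, Nat.add_sub_cancel, turanE]
  have choose_pos {l : ℕ} (hl : 2 ≤ l) : (0 : ℝ) < l.choose 2 := by
    exact_mod_cast Nat.choose_pos hl
  have hdensity := antitoneOn_extremalNumber_div_choose_two (⊤ : SimpleGraph (Fin (t + 1)))
    hm (hm.trans hmn) hmn
  simp only [← turanE_eq] at hdensity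
  have hn : (c : ℝ) ≤ k * (turanE t n / n.choose 2) := by
    rw [← mul_div_assoc, le_div_iff₀ (choose_pos (hm.trans hmn))]
    exact_mod_cast h
  have hm : (c : ℝ) ≤ k * (turanE t m / m.choose 2) := hn.trans (by gcongr)
  rw [← mul_div_assoc, le_div_iff₀ (choose_pos ‹_›)] at hm
  exact_mod_cast hm

-- The residues of at most `t` consecutive integers are distinct.
lemma sum_range_le_sum_range_mod {d : ℕ} (hd : d ≤ t) (c : ℕ) :
    ∑ i ∈ range d, i ≤ ∑ i ∈ range d, (c + i) % t := by
  have hinj : Set.InjOn (fun i ↦ (((c + i) % t : ℕ) : ℤ)) (range d) := by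
    intro i hi j hj hij
    simp only [coe_range, Set.mem_Iio, Nat.cast_inj] at hi hj hij
    exact (Nat.ModEq.add_left_cancel' c hij).eq_of_lt_of_lt (by omega) (by omega)
  have h := sum_range_le_sum (s := (range d).image fun i ↦ (((c + i) % t : ℕ) : ℤ)) (c := 0)
    (by simp only [mem_image]; rintro _ ⟨i, -, rfl⟩; positivity)
  rw [card_image_of_injOn hinj, sum_image hinj, card_range] at h
  rw [← Nat.cast_le (α := ℤ), Nat.cast_sum, Nat.cast_sum]
  simpa only [zero_add] using h

lemma mul_turanE_add_sum_mod (ht : 1 ≤ t) (c d : ℕ) :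
    t * turanE t (c + d) =
      t * turanE t c + (t - 1) * (c * d + d.choose 2) + ∑ i ∈ range d, (c + i) % t := by
  induction d with
  | zero => simp
  | succ d ih =>
    obtain ⟨s, rfl⟩ := Nat.exists_eq_add_of_le' ht
    have hstep := turanE_succ_add_div ht (c + d)
    have hdiv := Nat.div_add_mod (c + d) (s + 1)
    rw [sum_range_succ, ← add_assoc c d 1, choose_two_succ]
    simp only [Nat.add_sub_cancel] at ih ⊢
    nlinarith

lemma mul_turanE_add_le (ht : 1 ≤ t) {d : ℕ} (hd : d ≤ t) (c : ℕ) :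
    t * turanE t c + c * (d * (t - 1)) + t * d.choose 2 ≤ t * turanE t (c + d) := by
  have hmod := sum_range_le_sum_range_mod hd c
  rw [sum_range_id, ← Nat.choose_two_right] at hmod
  obtain ⟨s, rfl⟩ := Nat.exists_eq_add_of_le' ht
  rw [mul_turanE_add_sum_mod ht, Nat.add_sub_cancel]
  linarith

end TuranNumbers

section KTwo

variable {r n : ℕ}

lemma mul_choose_two_le_kTwo_mul_turanE (hr : 3 ≤ r) (hn : 2 ≤ n) :
    (r.choose 2 - 1) * n.choose 2 ≤ kTwo r n * turanE (r - 1) n := by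
  have hceil : (((r.choose 2 - 1) * n.choose 2 : ℕ) : ℚ) / (turanE (r - 1) n : ℕ) ≤ kTwo r n :=
    Nat.le_ceil _
  rw [div_le_iff₀ (by exact_mod_cast turanE_pos (by omega) hn)] at hceil
  exact_mod_cast hceil

lemma choose_two_le_kTwo (hr : 3 ≤ r) (hn : r ≤ n) : r.choose 2 ≤ kTwo r n := by
  obtain ⟨t, rfl⟩ := Nat.exists_eq_add_of_le' (by omega : 1 ≤ r)
  have hn_density := mul_choose_two_le_kTwo_mul_turanE hr (by omega : 2 ≤ n)
  have h := mul_choose_two_le_mul_turanE_of_le (by omega) hn hn_density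
  have hchoose : Nat.choose 3 2 ≤ (t + 1).choose 2 := Nat.choose_le_choose 2 hr
  rw [Nat.add_sub_cancel, turanE_self_succ (by omega), mul_comm] at h
  exact Nat.le_of_mul_le_mul_right h (Nat.sub_pos_of_lt (lt_of_lt_of_le (by decide) hchoose))

lemma choose_two_lt_kTwo (hr : 4 ≤ r) (hn : r < n) : r.choose 2 < kTwo r n := by
  obtain ⟨t, rfl⟩ := Nat.exists_eq_add_of_le' (by omega : 1 ≤ r)
  have hn_density := mul_choose_two_le_kTwo_mul_turanE (r := t + 1) (n := n) (by omega) (by omega)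
  have h := mul_choose_two_le_mul_turanE_of_le (by omega) (Nat.succ_le_of_lt hn) hn_density
  have hchoose : Nat.choose 3 2 ≤ t.choose 2 := Nat.choose_le_choose 2 (by omega)
  rw [Nat.add_sub_cancel, turanE_self_add_two (by omega), choose_two_succ (t + 1)] at h
  rw [choose_two_succ] at h ⊢
  by_contra! hle
  have hprod := h.trans (Nat.mul_le_mul_right _ hle)
  obtain ⟨b, hb⟩ := Nat.exists_eq_add_of_le' hchoose
  rw [show t.choose 2 = b + 3 from hb, show b + 3 + t - 1 = b + 2 + t by omega,
    show b + 3 + t + (t + 1) - 2 = b + t + t + 2 by omega] at hprod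
  nlinarith

end KTwo

section CliqueEdges

variable {V : Type*} [DecidableEq V]

/-- The edges of the clique on `S`, encoded as the unordered pairs of distinct elements of `S`. -/
def cliqueEdges (S : Finset V) : Finset (Sym2 V) := {e ∈ S.sym2 | ¬ e.IsDiag}

lemma mem_cliqueEdges {S : Finset V} {e : Sym2 V} :
    e ∈ cliqueEdges S ↔ (∀ v ∈ e, v ∈ S) ∧ ¬ e.IsDiag := by
  simp [cliqueEdges, mem_sym2_iff]

lemma mk_mem_cliqueEdges {S : Finset V} {x y : V} :
    s(x, y) ∈ cliqueEdges S ↔ x ∈ S ∧ y ∈ S ∧ x ≠ y := by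
  simp [cliqueEdges, and_assoc]

lemma cliqueEdges_univ [Fintype V] :
    cliqueEdges (univ : Finset V) = (⊤ : SimpleGraph V).edgeFinset := by
  ext e
  simp [mem_cliqueEdges]

lemma sum_cliqueEdges_insert {M : Type*} [AddCommMonoid M] (g : Sym2 V → M) {S : Finset V} {v : V}
    (hv : v ∉ S) :
    ∑ e ∈ cliqueEdges (insert v S), g e = ∑ e ∈ cliqueEdges S, g e + ∑ u ∈ S, g s(v, u) := by
  have hunion : cliqueEdges (insert v S) = cliqueEdges S ∪ S.image (s(v, ·)) := by
    ext e
    induction e with | _ x y =>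
    simp only [mk_mem_cliqueEdges, mem_union, mem_image, mem_insert, Sym2.eq_iff]
    grind
  have hdisj : Disjoint (cliqueEdges S) (S.image (s(v, ·))) := by
    simp only [Finset.disjoint_left, mem_cliqueEdges, mem_image]
    rintro _ ⟨hS, -⟩ ⟨u, -, rfl⟩
    exact hv (hS v (Sym2.mem_mk_left v u))
  rw [hunion, sum_union hdisj, sum_image fun a _ b _ ↦ Sym2.congr_right.1]

lemma card_cliqueEdges (S : Finset V) : #(cliqueEdges S) = (#S).choose 2 := by
  induction S using Finset.induction_on with
  | empty => rfl
  | insert v S hv ih =>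
    rw [card_eq_sum_ones, sum_cliqueEdges_insert _ hv, ← card_eq_sum_ones, ← card_eq_sum_ones, ih,
      card_insert_of_notMem hv, choose_two_succ]

lemma card_filter_cliqueEdges_insert (p : Sym2 V → Prop) [DecidablePred p] {S : Finset V} {v : V}
    (hv : v ∉ S) :
    #{e ∈ cliqueEdges (insert v S) | p e} = #{e ∈ cliqueEdges S | p e} + #{u ∈ S | p s(v, u)} := by
  simp only [card_filter, sum_cliqueEdges_insert _ hv]

lemma sum_cliqueEdges_union {M : Type*} [AddCommMonoid M] (g : Sym2 V → M) {A D : Finset V}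
    (hAD : Disjoint A D) :
    ∑ e ∈ cliqueEdges (A ∪ D), g e = ∑ e ∈ cliqueEdges A, g e + ∑ v ∈ A, ∑ u ∈ D, g s(v, u) +
      ∑ e ∈ cliqueEdges D, g e := by
  induction A using Finset.induction_on with
  | empty => simp [cliqueEdges]
  | insert v A hv ih =>
    rw [disjoint_insert_left] at hAD
    rw [insert_union, sum_cliqueEdges_insert _ (by simp [hv, hAD.1]), ih hAD.2,
      sum_union hAD.2, sum_cliqueEdges_insert _ hv, sum_insert hv]
    abel

lemma sum_cliqueEdges_le {f : Sym2 V → ℕ} {k : ℕ} (hf : ∀ e, ¬ e.IsDiag → f e ≤ k) (S : Finset V) :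
    ∑ e ∈ cliqueEdges S, f e ≤ k * (#S).choose 2 := by
  rw [mul_comm, ← card_cliqueEdges]
  exact sum_le_card_nsmul _ _ _ fun e he ↦ hf e (mem_cliqueEdges.1 he).2

end CliqueEdges

section GreedyCliques

variable {V : Type*} [DecidableEq V] {f : Sym2 V → ℕ} {t k c d : ℕ} {S U : Finset V}

/-- A clique with `d` vertices built one vertex at a time: it starts with an edge of weight above
`c`, and each further vertex sends to the part already built more than the fraction `(t - 1) / t` of
the weight allowed by the bound `k` on single edges. Such cliques are forced by a total weight above
`k * turanE t n`, and their weights can be bounded from below step by step. -/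
inductive IsGreedyClique (f : Sym2 V → ℕ) (t k c : ℕ) : ℕ → Finset V → Prop
  | pair {u v : V} (huv : u ≠ v) (h : c < f s(u, v)) : IsGreedyClique f t k c 2 {u, v}
  | insert {d : ℕ} {S : Finset V} {v : V} (hS : IsGreedyClique f t k c d S) (hv : v ∉ S)
      (h : k * (d * (t - 1)) < t * ∑ u ∈ S, f s(v, u)) :
      IsGreedyClique f t k c (d + 1) (insert v S)

lemma IsGreedyClique.card_eq (hS : IsGreedyClique f t k c d S) : #S = d := by
  induction hS with
  | pair huv => exact card_pair huv
  | insert _ hv _ ih => rw [card_insert_of_notMem hv, ih]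

lemma exists_isGreedyClique_two (h : c * (#U).choose 2 < ∑ e ∈ cliqueEdges U, f e) :
    ∃ S ⊆ U, IsGreedyClique f t k c 2 S := by
  obtain ⟨e, he, hlt⟩ : ∃ e ∈ cliqueEdges U, c < f e := by
    by_contra! hle
    have hsum := sum_le_card_nsmul _ f _ hle
    rw [card_cliqueEdges, smul_eq_mul, mul_comm] at hsum
    exact hsum.not_gt h
  induction e with | _ u v =>
  obtain ⟨hu, hv, huv⟩ := mk_mem_cliqueEdges.1 he
  exact ⟨{u, v}, by simp [insert_subset_iff, hu, hv], .pair huv hlt⟩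

-- Otherwise the bound for `U \ S`, the cross edges and the edges inside `S` add up to at most
-- `k * turanE t #U`, because adding `#S` vertices raises `turanE t` by at least as much.
lemma exists_lt_mul_sum_of_lt (ht : 1 ≤ t) (hf : ∀ e, ¬ e.IsDiag → f e ≤ k) (hSU : S ⊆ U)
    (hSt : #S ≤ t) (hdiff : ∑ e ∈ cliqueEdges (U \ S), f e ≤ k * turanE t #(U \ S))
    (hU : k * turanE t #U < ∑ e ∈ cliqueEdges U, f e) :
    ∃ v ∈ U \ S, k * (#S * (t - 1)) < t * ∑ u ∈ S, f s(v, u) := by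
  by_contra! hcross
  have hcross_sum := sum_le_card_nsmul _ _ _ hcross
  rw [← mul_sum, smul_eq_mul] at hcross_sum
  have hinside := sum_cliqueEdges_le hf S
  have hsplit := sum_cliqueEdges_union f (sdiff_disjoint : Disjoint (U \ S) S)
  have hturan := mul_turanE_add_le ht hSt #(U \ S)
  rw [sdiff_union_of_subset hSU] at hsplit
  rw [card_sdiff_add_card_eq_card hSU] at hturan
  refine hU.not_ge (Nat.le_of_mul_le_mul_left ?_ ht)
  calc t * ∑ e ∈ cliqueEdges U, f e
      ≤ t * (k * turanE t #(U \ S)) + #(U \ S) * (k * (#S * (t - 1))) +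
          t * (k * (#S).choose 2) := by
        rw [hsplit, mul_add, mul_add]
        gcongr
    _ = k * (t * turanE t #(U \ S) + #(U \ S) * (#S * (t - 1)) + t * (#S).choose 2) := by ring
    _ ≤ k * (t * turanE t #U) := by gcongr
    _ = t * (k * turanE t #U) := by ring

lemma exists_isGreedyClique_of_minimal (ht : 1 ≤ t) (hf : ∀ e, ¬ e.IsDiag → f e ≤ k)
    (hc : c * (#U).choose 2 ≤ k * turanE t #U)
    (hU : k * turanE t #U < ∑ e ∈ cliqueEdges U, f e)
    (hmin : ∀ W ⊂ U, ∑ e ∈ cliqueEdges W, f e ≤ k * turanE t #W) :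
    ∃ S ⊆ U, IsGreedyClique f t k c (t + 1) S := by
  suffices ∀ d, 2 ≤ d → d ≤ t + 1 → ∃ S ⊆ U, IsGreedyClique f t k c d S from
    this _ (by omega) le_rfl
  intro d hd
  induction d, hd using Nat.le_induction with
  | base => exact fun _ ↦ exists_isGreedyClique_two (hc.trans_lt hU)
  | succ d hd ih =>
    intro hdt
    obtain ⟨S, hSU, hS⟩ := ih (by omega)
    have hne : S.Nonempty := card_pos.1 (by rw [hS.card_eq]; omega)
    obtain ⟨v, hv, hlt⟩ := exists_lt_mul_sum_of_lt ht hf hSU (by rw [hS.card_eq]; omega)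
      (hmin _ (sdiff_ssubset hSU hne)) hU
    rw [mem_sdiff] at hv
    rw [hS.card_eq] at hlt
    exact ⟨insert v S, insert_subset hv.1 hSU, hS.insert hv.2 hlt⟩

theorem exists_isGreedyClique (ht : 1 ≤ t) (hf : ∀ e, ¬ e.IsDiag → f e ≤ k)
    (hc : c * (#U).choose 2 ≤ k * turanE t #U)
    (hU : k * turanE t #U < ∑ e ∈ cliqueEdges U, f e) :
    ∃ S, IsGreedyClique f t k c (t + 1) S := by
  induction U using Finset.strongInduction with
  | H U ih =>
    by_cases hmin : ∃ W ⊂ U, k * turanE t #W < ∑ e ∈ cliqueEdges W, f e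
    · obtain ⟨W, hWU, hW⟩ := hmin
      exact ih W hWU (mul_choose_two_le_mul_turanE_of_le ht (card_le_card hWU.subset) hc) hW
    · push Not at hmin
      obtain ⟨S, -, hS⟩ := exists_isGreedyClique_of_minimal ht hf hc hU hmin
      exact ⟨S, hS⟩

end GreedyCliques

section Orderings

variable {α : Type*} {s : Finset α} {g : α → ℕ} {k : ℕ}

lemma sum_le_card_filter_lt (hg : ∀ a ∈ s, g a ≤ k) (j : ℕ) :
    ∑ a ∈ s, g a ≤ #{a ∈ s | j < g a} * k + (#s - #{a ∈ s | j < g a}) * j := by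
  have hcard := card_filter_add_card_filter_not (s := s) (j < g ·)
  rw [← hcard, Nat.add_sub_cancel_left, ← sum_filter_add_sum_filter_not s (j < g ·)]
  gcongr
  · exact sum_le_card_nsmul _ _ _ fun a ha ↦ hg a (mem_filter.1 ha).1
  · exact sum_le_card_nsmul _ _ _ fun a ha ↦ not_lt.1 (mem_filter.1 ha).2

-- Hall's condition only has to be checked on the up-sets `{i | j ≤ i}`.
lemma exists_injective_lt_of_le_card_filter_lt {N : ℕ}
    (h : ∀ j < N, N - j ≤ #{a ∈ s | j < g a}) :
    ∃ φ : Fin N → α, Function.Injective φ ∧ ∀ i, φ i ∈ s ∧ i < g (φ i) := by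
  classical
  let candidates (i : Fin N) : Finset α := {a ∈ s | i < g a}
  have hall (I : Finset (Fin N)) : #I ≤ #(I.biUnion candidates) := by
    rcases I.eq_empty_or_nonempty with rfl | hI
    · simp
    calc #I ≤ #(Ici (I.min' hI)) := card_le_card fun i hi ↦ mem_Ici.2 (I.min'_le i hi)
      _ = N - I.min' hI := Fin.card_Ici _
      _ ≤ #(candidates (I.min' hI)) := h _ (I.min' hI).isLt
      _ ≤ #(I.biUnion candidates) :=
        card_le_card (subset_biUnion_of_mem candidates (I.min'_mem hI))
  obtain ⟨φ, hinj, hφ⟩ := (all_card_le_biUnion_card_iff_exists_injective candidates).1 hall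
  exact ⟨φ, hinj, fun i ↦ mem_filter.1 (hφ i)⟩

lemma card_sub_le_card_filter_lt (hg : ∀ a ∈ s, g a ≤ #s) (hsum : #s * (#s - 1) < ∑ a ∈ s, g a)
    {j : ℕ} (hj : j < #s) : #s - j ≤ #{a ∈ s | j < g a} := by
  have hle := hsum.trans_le (sum_le_card_filter_lt hg j)
  contrapose! hle
  generalize #{a ∈ s | j < g a} = p at hle ⊢
  obtain ⟨q, hq⟩ := Nat.exists_eq_add_of_lt (Nat.lt_sub_iff_add_lt.1 hle)
  rw [show #s - p = j + q + 1 by omega, show #s - 1 = p + j + q by omega, hq]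
  nlinarith [Nat.zero_le (q * q + j * p + j * q + p * q + q)]

end Orderings

section WeightSequenceBounds

variable {n r : ℕ} {f : Sym2 (Fin n) → ℕ} {S : Finset (Fin n)}

lemma hasWSB_of_le_card_filter_lt
    (h : ∀ j < r.choose 2, r.choose 2 - j ≤ #{e ∈ cliqueEdges S | j < f e}) :
    HasWSB n r f S := by
  obtain ⟨g, hinj, hg⟩ := exists_injective_lt_of_le_card_filter_lt h
  exact ⟨g, hinj, fun i ↦ (mem_cliqueEdges.1 (hg i).1).symm, fun i ↦ (hg i).2⟩

lemma hasWSB_of_lt_sum (hS : #S = r) (hf : ∀ e, ¬ e.IsDiag → f e ≤ r.choose 2)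
    (hsum : r.choose 2 * (r.choose 2 - 1) < ∑ e ∈ cliqueEdges S, f e) : HasWSB n r f S := by
  rw [← hS, ← card_cliqueEdges] at hf hsum
  refine hasWSB_of_le_card_filter_lt ?_
  rw [← hS, ← card_cliqueEdges]
  exact fun j hj ↦ card_sub_le_card_filter_lt (fun e he ↦ hf e (mem_cliqueEdges.1 he).2) hsum hj

end WeightSequenceBounds

section GreedyCounting

variable {V : Type*} [DecidableEq V] {f : Sym2 V → ℕ} {t k c d j : ℕ} {S : Finset V}

lemma IsGreedyClique.one_le_card_filter_lt (hS : IsGreedyClique f t k c 2 S) (hj : j ≤ c) :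
    1 ≤ #{e ∈ cliqueEdges S | j < f e} := by
  cases hS with
  | @pair u v huv h =>
    exact card_pos.2 ⟨s(u, v), by simp [mk_mem_cliqueEdges, huv, hj.trans_lt h]⟩
  | insert hS => nomatch hS

lemma IsGreedyClique.exists_card_filter_lt_eq_add (hf : ∀ e, ¬ e.IsDiag → f e ≤ k)
    (hS : IsGreedyClique f t k c (d + 1) S) (hd : 2 ≤ d) :
    ∃ S', IsGreedyClique f t k c d S' ∧ ∀ j, ∃ p ≤ d,
      #{e ∈ cliqueEdges S | j < f e} = #{e ∈ cliqueEdges S' | j < f e} + p ∧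
      k * (d * (t - 1)) < t * (p * k + (d - p) * j) := by
  cases hS with
  | pair => omega
  | @insert _ S' v hS' hv h =>
    refine ⟨S', hS', fun j ↦
      ⟨#{u ∈ S' | j < f s(v, u)}, ?_, card_filter_cliqueEdges_insert _ hv, ?_⟩⟩
    · exact (card_filter_le _ _).trans_eq hS'.card_eq
    · have hle := sum_le_card_filter_lt (s := S') (g := fun u ↦ f s(v, u)) (k := k)
        (fun u hu ↦ hf _ (by rw [Sym2.mk_isDiag_iff]; rintro rfl; exact hv hu)) j
      rw [hS'.card_eq] at hle
      exact h.trans_le (Nat.mul_le_mul_left t hle)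

-- In the next three lemmas `p₂`, `p₃`, `p₄` count the edges heavier than `j` that the third, fourth
-- and fifth vertex contribute; the fewer these are, the larger `j` has to be.
lemma IsGreedyClique.sub_le_card_filter_lt_three (hf : ∀ e, ¬ e.IsDiag → f e ≤ k)
    (hS : IsGreedyClique f 2 k 2 3 S) (hk : 3 ≤ k) (hj : j < 3) :
    3 - j ≤ #{e ∈ cliqueEdges S | j < f e} := by
  obtain ⟨S₂, hS₂, hstep₂⟩ := hS.exists_card_filter_lt_eq_add hf le_rfl
  obtain ⟨p₂, hp₂, hcard₂, hlt₂⟩ := hstep₂ j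
  have hone := hS₂.one_le_card_filter_lt (by omega : j ≤ 2)
  have htwo : (j < 1 → 2 ≤ p₂) ∧ (j < 2 → 1 ≤ p₂) := by interval_cases p₂ <;> omega
  omega

lemma IsGreedyClique.sub_le_card_filter_lt_four (hf : ∀ e, ¬ e.IsDiag → f e ≤ k)
    (hS : IsGreedyClique f 3 k 5 4 S) (hk : 6 ≤ k) (hj : j < 6) :
    6 - j ≤ #{e ∈ cliqueEdges S | j < f e} := by
  obtain ⟨S₃, hS₃, hstep₃⟩ := hS.exists_card_filter_lt_eq_add hf (by omega)
  obtain ⟨p₃, hp₃, hcard₃, hlt₃⟩ := hstep₃ j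
  obtain ⟨S₂, hS₂, hstep₂⟩ := hS₃.exists_card_filter_lt_eq_add hf le_rfl
  obtain ⟨p₂, hp₂, hcard₂, hlt₂⟩ := hstep₂ j
  have hone := hS₂.one_le_card_filter_lt (by omega : j ≤ 5)
  have htwo : (j < 3 → 2 ≤ p₂) ∧ (j < 5 → 1 ≤ p₂) := by interval_cases p₂ <;> omega
  have hthree : (j < 1 → 3 ≤ p₃) ∧ (j < 4 → 2 ≤ p₃) ∧ (j < 5 → 1 ≤ p₃) := by
    interval_cases p₃ <;> omega
  omega

lemma IsGreedyClique.sub_le_card_filter_lt_five (hf : ∀ e, ¬ e.IsDiag → f e ≤ k)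
    (hS : IsGreedyClique f 4 k 9 5 S) (hk : 11 ≤ k) (hj : j < 10) :
    10 - j ≤ #{e ∈ cliqueEdges S | j < f e} := by
  obtain ⟨S₄, hS₄, hstep₄⟩ := hS.exists_card_filter_lt_eq_add hf (by omega)
  obtain ⟨p₄, hp₄, hcard₄, hlt₄⟩ := hstep₄ j
  obtain ⟨S₃, hS₃, hstep₃⟩ := hS₄.exists_card_filter_lt_eq_add hf (by omega)
  obtain ⟨p₃, hp₃, hcard₃, hlt₃⟩ := hstep₃ j
  obtain ⟨S₂, hS₂, hstep₂⟩ := hS₃.exists_card_filter_lt_eq_add hf le_rfl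
  obtain ⟨p₂, hp₂, hcard₂, hlt₂⟩ := hstep₂ j
  have hone := hS₂.one_le_card_filter_lt (by omega : j ≤ 9)
  have htwo : (j < 6 → 2 ≤ p₂) ∧ (j < 9 → 1 ≤ p₂) := by interval_cases p₂ <;> omega
  have hthree : (j < 3 → 3 ≤ p₃) ∧ (j < 7 → 2 ≤ p₃) ∧ (j < 9 → 1 ≤ p₃) := by
    interval_cases p₃ <;> omega
  have hfour : (j < 1 → 4 ≤ p₄) ∧ (j < 6 → 3 ≤ p₄) ∧ (j < 8 → 2 ≤ p₄) ∧ (j < 9 → 1 ≤ p₄) := by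
    interval_cases p₄ <;> omega
  omega

end GreedyCounting

section WeightBound

variable {n r k : ℕ} {f : Sym2 (Fin n) → ℕ}

lemma IsGreedyClique.hasWSB {S : Finset (Fin n)} (hr : 3 ≤ r) (hr' : r ≤ 5) (hk : r.choose 2 ≤ k)
    (hk' : r = 5 → 10 < k) (hf : ∀ e, ¬ e.IsDiag → f e ≤ k)
    (hS : IsGreedyClique f (r - 1) k (r.choose 2 - 1) r S) : HasWSB n r f S := by
  refine hasWSB_of_le_card_filter_lt fun j hj ↦ ?_
  interval_cases r
  · exact hS.sub_le_card_filter_lt_three hf hk hj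
  · exact hS.sub_le_card_filter_lt_four hf hk hj
  · exact hS.sub_le_card_filter_lt_five hf (hk' rfl) hj

lemma exists_hasWSB_of_lt_sum (hr : 3 ≤ r) (hr' : r ≤ 5) (hn : 2 ≤ n) (hk : kTwo r n ≤ k)
    (hkr : r.choose 2 ≤ k) (hk' : r = 5 → 10 < k) (hf : ∀ e, ¬ e.IsDiag → f e ≤ k)
    (hsum : k * turanE (r - 1) n < ∑ e ∈ cliqueEdges univ, f e) :
    ∃ S, #S = r ∧ HasWSB n r f S := by
  have hdensity : (r.choose 2 - 1) * n.choose 2 ≤ k * turanE (r - 1) n :=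
    (mul_choose_two_le_kTwo_mul_turanE hr hn).trans (Nat.mul_le_mul_right _ hk)
  rw [← Fintype.card_fin n, ← card_univ] at hdensity
  obtain ⟨S, hS⟩ := exists_isGreedyClique (U := univ) (by omega) hf hdensity (by simpa using hsum)
  rw [Nat.sub_add_cancel (by omega)] at hS
  exact ⟨S, hS.card_eq, hS.hasWSB hr hr' hkr hk' hf⟩

lemma hasWSB_univ_of_lt_sum {f : Sym2 (Fin r) → ℕ} (hr : 2 ≤ r)
    (hf : ∀ e, ¬ e.IsDiag → f e ≤ r.choose 2)
    (hsum : r.choose 2 * turanE (r - 1) r < ∑ e ∈ cliqueEdges univ, f e) :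
    HasWSB r r f univ := by
  refine hasWSB_of_lt_sum (card_fin r) hf ?_
  obtain ⟨t, rfl⟩ := Nat.exists_eq_add_of_le' (by omega : 1 ≤ r)
  rwa [Nat.add_sub_cancel, turanE_self_succ (by omega)] at hsum

theorem weighted_bound_k2_general (hr : 3 ≤ r) (hr' : r ≤ 5) (hk : kTwo r n ≤ k)
    (hf : ∀ e, ¬ e.IsDiag → f e ≤ k) (hwsb : ∀ S : Finset (Fin n), #S = r → ¬ HasWSB n r f S) :
    ∑ e ∈ (⊤ : SimpleGraph (Fin n)).edgeFinset, f e ≤ k * turanE (r - 1) n := by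
  rw [← cliqueEdges_univ]
  rcases lt_or_ge n r with hn | hn
  · simpa [turanE_of_le (Nat.le_sub_one_of_lt hn)] using sum_cliqueEdges_le hf univ
  by_contra! hsum
  have hkr : r.choose 2 ≤ k := (choose_two_le_kTwo hr hn).trans hk
  by_cases hk' : r = 5 → 10 < k
  · obtain ⟨S, hcard, hS⟩ :=
      exists_hasWSB_of_lt_sum hr hr' (by omega) hk hkr hk' hf hsum
    exact hwsb S hcard hS
  · push Not at hk'
    obtain ⟨rfl, hk_le⟩ := hk'
    obtain rfl : k = Nat.choose 5 2 := le_antisymm hk_le hkr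
    obtain rfl : n = 5 := by
      by_contra hne
      exact hk.not_gt (choose_two_lt_kTwo (by omega) (by omega))
    exact hwsb univ (card_fin 5) (hasWSB_univ_of_lt_sum (by omega) hf hsum)

end WeightBound

/-- Conjecture 2.2 (ii) for `r ∈ {4,5}`: if `f` is a `k₂`-weighting on `K_n` such that no
`r`-clique has weight sequence bound `(1, …, C(r,2))`, then `Σ_e f(e) ≤ k₂·t_{r−1}(n)`. -/
theorem weighted_bound_k2 (r n : ℕ) (hr : r = 4 ∨ r = 5) (hn : r ≤ n)
    (f : Sym2 (Fin n) → ℕ)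
    (hf : ∀ e : Sym2 (Fin n), ¬ e.IsDiag → f e ≤ kTwo r n)
    (hwsb : ∀ S : Finset (Fin n), S.card = r → ¬ HasWSB n r f S) :
    ∑ e ∈ (⊤ : SimpleGraph (Fin n)).edgeFinset, f e ≤ kTwo r n * turanE (r - 1) n := by
  exact weighted_bound_k2_general (by omega) (by omega) le_rfl hf hwsb
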